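/- arXiv:1603.06385 — 5 statements merged into one kernel-verified Lean document; each statement's English description precedes it below -/
import Mathlib

section
/- Let W be a kernel and g ∈ L∞([0,1]). For each n ∈ ℕ let W_n and g_n be the block averages of W and g, let u be the solution of the continuum voting model IVP for (W, g) and u_n the solution for (W_n, g_n). Then for every T > 0, sup_{t∈[0,T]} ‖u(·,t) − u_n(·,t)‖_{L²([0,1])} → 0 as n → ∞. -/
open MeasureTheory Filter Set

noncomputable section

/-- Lebesgue measure restricted to `[0,1]`. -/
def mu01 : Measure ℝ := volume.restrict (Set.Icc (0:ℝ) 1)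

/-- A kernel: a symmetric measurable function `[0,1]² → [-1,1]`. -/
def IsKernel (W : ℝ → ℝ → ℝ) : Prop :=
  Measurable (Function.uncurry W) ∧ (∀ x y, W x y = W y x) ∧
    ∀ x y, W x y ∈ Set.Icc (-1:ℝ) 1

/-- A graphon: a symmetric measurable function `[0,1]² → [0,1]`. -/
def IsGraphon (W : ℝ → ℝ → ℝ) : Prop :=
  Measurable (Function.uncurry W) ∧ (∀ x y, W x y = W y x) ∧
    ∀ x y, W x y ∈ Set.Icc (0:ℝ) 1

/-- `g ∈ L∞([0,1])`: measurable and essentially bounded on `[0,1]`. -/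
def IsLinf (g : ℝ → ℝ) : Prop :=
  Measurable g ∧ ∃ M : ℝ, ∀ᵐ x ∂mu01, |g x| ≤ M

/-- A solution of the continuum voting model IVP for `(W, g)`: a jointly measurable
function, essentially bounded on `[0,1] × [0,T]` for every `T > 0`, satisfying the
integral form of the IVP for every `t ≥ 0` and almost every `x ∈ [0,1]`. -/
def IsSolution (W : ℝ → ℝ → ℝ) (g : ℝ → ℝ) (u : ℝ → ℝ → ℝ) : Prop :=
  Measurable (Function.uncurry u) ∧
  (∀ T > (0:ℝ), ∃ M : ℝ, ∀ t ∈ Set.Icc (0:ℝ) T, ∀ᵐ x ∂mu01, |u x t| ≤ M) ∧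
  (∀ t ≥ (0:ℝ), ∀ᵐ x ∂mu01,
    u x t = g x + ∫ s in Set.Icc (0:ℝ) t, ∫ y in Set.Icc (0:ℝ) 1, W x y * (u y s - u x s))

/-- A bounded solution: essentially uniformly bounded over all times `t ≥ 0`. -/
def BoundedSolution (u : ℝ → ℝ → ℝ) : Prop :=
  ∃ M : ℝ, ∀ t ≥ (0:ℝ), ∀ᵐ x ∂mu01, |u x t| ≤ M

/-- `u` reaches consensus on `A`:
`lim_{t→∞} ess sup_{(x,y) ∈ A×A} |u(x,t) − u(y,t)| = 0`. -/
def ReachesConsensusOn (u : ℝ → ℝ → ℝ) (A : Set ℝ) : Prop :=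
  ∀ ε > (0:ℝ), ∃ T : ℝ, ∀ t ≥ T,
    ∀ᵐ p : ℝ × ℝ ∂((volume.restrict A).prod (volume.restrict A)),
      |u p.1 t - u p.2 t| ≤ ε

open Classical in
/-- `u*(x) = lim_{t→∞} u(x,t)` where the limit exists, and `0` otherwise. -/
def uStar (u : ℝ → ℝ → ℝ) (x : ℝ) : ℝ :=
  if h : ∃ L : ℝ, Filter.Tendsto (fun t => u x t) Filter.atTop (nhds L)
  then h.choose else 0

/-- The normalised degree function of a kernel. -/
def degW (W : ℝ → ℝ → ℝ) (x : ℝ) : ℝ := ∫ y in Set.Icc (0:ℝ) 1, W x y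

/-- The block `I_iⁿ = ((i−1)/n, i/n]` containing `x`, i.e. with `i = ⌈n x⌉`. -/
def blockIoc (n : ℕ) (x : ℝ) : Set ℝ :=
  Set.Ioc (((⌈(n : ℝ) * x⌉ : ℤ) : ℝ) / n - 1 / n) (((⌈(n : ℝ) * x⌉ : ℤ) : ℝ) / n)

/-- The block average of `g`: `g_n(x) = n ∫_{I_iⁿ} g` for `x ∈ I_iⁿ`. -/
def blockAvgG (n : ℕ) (g : ℝ → ℝ) (x : ℝ) : ℝ :=
  (n : ℝ) * ∫ y in blockIoc n x, g y

/-- The block average of `W`: `W_n(x,y) = n² ∫_{I_iⁿ × I_jⁿ} W` for `(x,y) ∈ I_iⁿ × I_jⁿ`. -/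
def blockAvgW (n : ℕ) (W : ℝ → ℝ → ℝ) (x y : ℝ) : ℝ :=
  (n : ℝ) ^ 2 * ∫ p in (blockIoc n x) ×ˢ (blockIoc n y), W p.1 p.2

/-- The `L²([0,1])` norm. -/
def L2normI (f : ℝ → ℝ) : ℝ := Real.sqrt (∫ x in Set.Icc (0:ℝ) 1, (f x) ^ 2)

/-- The `L²([0,1]²)` norm. -/
def L2normSq (F : ℝ → ℝ → ℝ) : ℝ :=
  Real.sqrt (∫ p in (Set.Icc (0:ℝ) 1) ×ˢ (Set.Icc (0:ℝ) 1), (F p.1 p.2) ^ 2)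

/-- `A` is a twin-set of `W`. -/
def IsTwinSet (W : ℝ → ℝ → ℝ) (A : Set ℝ) : Prop :=
  MeasurableSet A ∧ A ⊆ Set.Icc (0:ℝ) 1 ∧ 0 < volume A ∧
  ∃ a : ℝ → ℝ → ℝ, ∀ x ∈ A, ∀ x' ∈ A,
    ∀ᵐ y ∂mu01, W x y = a x x' * W x' y

/-- `A` is a maximal twin-set of `W`. -/
def IsMaximalTwinSet (W : ℝ → ℝ → ℝ) (A : Set ℝ) : Prop :=
  IsTwinSet W A ∧ ∀ B : Set ℝ, IsTwinSet W B → A ⊆ B → volume (symmDiff B A) = 0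

/-- A kernel is connected if every measurable `S ⊆ [0,1]` with `0 < λ(S) < 1` satisfies
`∫_{S × ([0,1]∖S)} |W| > 0`. -/
def ConnectedKernel (W : ℝ → ℝ → ℝ) : Prop :=
  ∀ S : Set ℝ, MeasurableSet S → S ⊆ Set.Icc (0:ℝ) 1 →
    0 < volume S → volume S < 1 →
    0 < ∫ p in S ×ˢ (Set.Icc (0:ℝ) 1 \ S), |W p.1 p.2|

/-- A twin-graphon: a graphon with finitely many maximal twin-sets covering `[0,1]`
up to a null set. -/
def IsTwinGraphon (W : ℝ → ℝ → ℝ) : Prop :=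
  IsGraphon W ∧ ∃ (n : ℕ) (A : Fin n → Set ℝ),
    (∀ i, IsMaximalTwinSet W (A i)) ∧
    volume (symmDiff (Set.Icc (0:ℝ) 1) (⋃ i, A i)) = 0

/-!
The squared `L²` distance `φ t` between two solutions is controlled by their data: squaring the
difference of the integral equations and using Cauchy–Schwarz in time and in space bounds `φ t` by
the squared `L²` distances of the initial values and of the kernels plus a multiple of `∫₀ᵗ φ`, and
Grönwall's inequality removes the last term. The constants involve a bound on the second kernel but
on the first solution only, so the estimate is uniform in `n` when the second solution is the one
for the block averages. The block averages converge to `W` and `g` almost everywhere by the Lebesgue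
differentiation theorem, hence in `L²` by dominated convergence. As solutions are only essentially
bounded at each time, they are first replaced by representatives bounded everywhere, which solve the
same equation by Fubini's theorem.
-/

theorem le_mul_exp_of_le_add_integral_of_continuousOn {f : ℝ → ℝ} {a b δ K : ℝ} (hK : 0 ≤ K)
    (hf : ContinuousOn f (Icc a b)) (hle : ∀ t ∈ Icc a b, f t ≤ δ + K * ∫ s in a..t, f s) :
    ∀ t ∈ Icc a b, f t ≤ δ * Real.exp (K * (t - a)) := by
  intro t ht
  have hab : a ≤ b := ht.1.trans ht.2
  set G : ℝ → ℝ := fun t => δ + K * ∫ s in a..t, f s with hG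
  have hG_cont : ContinuousOn G (Icc a b) := by
    have hint : IntegrableOn f (uIcc a b) := by
      rw [uIcc_of_le hab]
      exact hf.integrableOn_Icc
    have := intervalIntegral.continuousOn_primitive_interval hint
    rw [uIcc_of_le hab] at this
    fun_prop
  have hG_deriv (s : ℝ) (hs : s ∈ Ico a b) : HasDerivWithinAt G (K * f s) (Ici s) s := by
    have hnhds : Ioo s b ∈ nhdsWithin s (Ioi s) := Ioo_mem_nhdsGT hs.2
    have hsub : Ioo s b ⊆ Icc a b := fun r hr => ⟨hs.1.trans hr.1.le, hr.2.le⟩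
    have hcont : ContinuousWithinAt f (Ioi s) s :=
      (hf s ⟨hs.1, hs.2.le⟩).mono_of_mem_nhdsWithin (mem_of_superset hnhds hsub)
    have hmeas : StronglyMeasurableAtFilter f (nhdsWithin s (Ioi s)) volume :=
      ⟨Ioo s b, hnhds, (hf.mono hsub).aestronglyMeasurable measurableSet_Ioo⟩
    have hint : IntervalIntegrable f volume a s :=
      (hf.mono (Icc_subset_Icc_right hs.2.le)).intervalIntegrable_of_Icc hs.1
    have := intervalIntegral.integral_hasDerivWithinAt_right hint (s := Ici s) hmeas hcont
    exact (this.const_mul K).const_add δ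
  have hG_le := le_gronwallBound_of_liminf_deriv_right_le (δ := δ) (K := K) (ε := 0) hG_cont
    (fun s hs r hr => (hG_deriv s hs).liminf_right_slope_le hr) (by simp [hG])
    (fun s hs => by
      rw [add_zero]
      exact mul_le_mul_of_nonneg_left (hle s ⟨hs.1, hs.2.le⟩) hK) t ht
  rw [gronwallBound_ε0] at hG_le
  exact (hle t ht).trans hG_le

theorem le_mul_exp_of_le_add_integral {f : ℝ → ℝ} {a b δ K : ℝ} (hK : 0 ≤ K)
    (hf : IntegrableOn f (Icc a b)) (hle : ∀ t ∈ Icc a b, f t ≤ δ + K * ∫ s in a..t, f s) :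
    ∀ t ∈ Icc a b, f t ≤ δ * Real.exp (K * (t - a)) := by
  intro t ht
  have hab : a ≤ b := ht.1.trans ht.2
  set F : ℝ → ℝ := fun t => δ + K * ∫ s in a..t, f s
  have hF_cont : ContinuousOn F (Icc a b) := by
    rw [← uIcc_of_le hab] at hf ⊢
    have := intervalIntegral.continuousOn_primitive_interval hf
    fun_prop
  have hF_le (r : ℝ) (hr : r ∈ Icc a b) : F r ≤ δ + K * ∫ s in a..r, F s := by
    have hsub : Icc a r ⊆ Icc a b := Icc_subset_Icc_right hr.2
    have hf_int : IntervalIntegrable f volume a r :=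
      (intervalIntegrable_iff_integrableOn_Icc_of_le hr.1).2 (hf.mono_set hsub)
    have := intervalIntegral.integral_mono_on hr.1 hf_int
      ((hF_cont.mono hsub).intervalIntegrable_of_Icc hr.1) fun s hs => hle s (hsub hs)
    exact add_le_add le_rfl (mul_le_mul_of_nonneg_left this hK)
  exact (hle t ht).trans
    (le_mul_exp_of_le_add_integral_of_continuousOn hK hF_cont hF_le t ht)

section

variable {α β : Type*} [MeasurableSpace α] [MeasurableSpace β] {μ : Measure α} {ν : Measure β}

theorem sq_integral_le_measureReal_mul_integral_sq [IsFiniteMeasure μ] {f : α → ℝ}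
    (hf : MemLp f 2 μ) :
    (∫ x, f x ∂μ) ^ 2 ≤ μ.real univ * ∫ x, f x ^ 2 ∂μ := by
  rcases eq_zero_or_neZero μ with rfl | hμ
  · simp
  have hpos : 0 < μ.real univ := measureReal_univ_pos
  have hjensen := even_two.convexOn_pow.map_average_le (continuous_pow 2).continuousOn isClosed_univ
    (ae_of_all μ fun x => mem_univ (f x)) (hf.integrable one_le_two) hf.integrable_sq
  simp only [average_eq, smul_eq_mul, mul_pow] at hjensen
  field_simp at hjensen
  linarith

theorem integral_sq_add_integral_le [SFinite μ] [IsFiniteMeasure ν] {a : α → ℝ} {R : α → β → ℝ}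
    (ha : MemLp a 2 μ) (hR : MemLp (Function.uncurry R) 2 (μ.prod ν)) :
    ∫ x, (a x + ∫ s, R x s ∂ν) ^ 2 ∂μ ≤
      2 * ∫ x, a x ^ 2 ∂μ + 2 * ν.real univ * ∫ s, ∫ x, R x s ^ 2 ∂μ ∂ν := by
  have hR_sq : Integrable (Function.uncurry fun x s => R x s ^ 2) (μ.prod ν) := hR.integrable_sq
  have ha_int := ha.integrable_sq.const_mul 2
  have hR_int : Integrable (fun x => 2 * ν.real univ * ∫ s, R x s ^ 2 ∂ν) μ :=
    hR_sq.integral_prod_left.const_mul (2 * ν.real univ)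
  have hpt : ∀ᵐ x ∂μ, (a x + ∫ s, R x s ∂ν) ^ 2 ≤
      2 * a x ^ 2 + 2 * ν.real univ * ∫ s, R x s ^ 2 ∂ν := by
    filter_upwards [hR.1.prodMk_left, hR_sq.prod_right_ae] with x hmeas hsq
    have := sq_integral_le_measureReal_mul_integral_sq ((memLp_two_iff_integrable_sq hmeas).2 hsq)
    have := add_sq_le (a := a x) (b := ∫ s, R x s ∂ν)
    dsimp only [Function.uncurry] at *
    linarith
  calc ∫ x, (a x + ∫ s, R x s ∂ν) ^ 2 ∂μ
      ≤ ∫ x, (2 * a x ^ 2 + 2 * ν.real univ * ∫ s, R x s ^ 2 ∂ν) ∂μ :=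
        integral_mono_of_nonneg (ae_of_all μ fun x => sq_nonneg _) (ha_int.add hR_int) hpt
    _ = _ := by
        rw [integral_add ha_int hR_int, integral_const_mul, integral_const_mul,
          integral_integral_swap hR_sq]

theorem norm_average_le {E : Type*} [NormedAddCommGroup E] [NormedSpace ℝ E] {f : α → E} {C : ℝ}
    (hC : 0 ≤ C) (hf : ∀ᵐ x ∂μ, ‖f x‖ ≤ C) : ‖⨍ x, f x ∂μ‖ ≤ C :=
  (norm_integral_le_of_norm_le_const (hf.filter_mono (Measure.ae_smul_measure_le _))).trans
    (mul_le_of_le_one_right hC measureReal_le_one)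

theorem exists_measurable_abs_le_eq_of_abs_le {f : α → ℝ} (hf : Measurable f) (M : ℝ) :
    ∃ f' : α → ℝ, Measurable f' ∧ (∀ a, |f' a| ≤ |M|) ∧ ∀ a, |f a| ≤ M → f' a = f a := by
  refine ⟨{a | |f a| ≤ M}.indicator f, hf.indicator (measurableSet_le hf.abs measurable_const),
    fun a => ?_, fun a ha => indicator_of_mem (s := {a | |f a| ≤ M}) ha f⟩
  by_cases ha : |f a| ≤ M
  · rw [indicator_of_mem (s := {a | |f a| ≤ M}) ha]
    exact ha.trans (le_abs_self M)
  · rw [indicator_of_notMem (s := {a | |f a| ≤ M}) ha, abs_zero]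
    exact abs_nonneg M

/-- `f` is measurable and everywhere bounded by `C` in absolute value. The bound is required at
every point, so that sections and compositions of `f` inherit it without null sets. -/
structure BoundedMeasurable (f : α → ℝ) (C : ℝ) : Prop where
  measurable : Measurable f
  abs_le : ∀ a, |f a| ≤ C

namespace BoundedMeasurable

variable {f g : α → ℝ} {C D : ℝ}

theorem comp (hf : BoundedMeasurable f C) {φ : β → α} (hφ : Measurable φ) :
    BoundedMeasurable (fun b => f (φ b)) C :=
  ⟨hf.measurable.comp hφ, fun b => hf.abs_le (φ b)⟩

theorem sub (hf : BoundedMeasurable f C) (hg : BoundedMeasurable g D) :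
    BoundedMeasurable (fun a => f a - g a) (C + D) :=
  ⟨hf.measurable.sub hg.measurable,
    fun a => (abs_sub _ _).trans (add_le_add (hf.abs_le a) (hg.abs_le a))⟩

theorem mul (hf : BoundedMeasurable f C) (hg : BoundedMeasurable g D) :
    BoundedMeasurable (fun a => f a * g a) (C * D) where
  measurable := hf.measurable.mul hg.measurable
  abs_le a := by
    rw [abs_mul]
    exact mul_le_mul (hf.abs_le a) (hg.abs_le a) (abs_nonneg _)
      ((abs_nonneg _).trans (hf.abs_le a))

theorem sq (hf : BoundedMeasurable f C) : BoundedMeasurable (fun a => f a ^ 2) (C ^ 2) := by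
  simpa only [pow_two] using hf.mul hf

theorem memLp [IsFiniteMeasure μ] (hf : BoundedMeasurable f C) (p : ENNReal) : MemLp f p μ :=
  MemLp.of_bound hf.measurable.aestronglyMeasurable C (ae_of_all μ hf.abs_le)

theorem integrable [IsFiniteMeasure μ] (hf : BoundedMeasurable f C) : Integrable f μ :=
  (hf.memLp 1).integrable le_rfl

theorem locallyIntegrable [TopologicalSpace α] [IsLocallyFiniteMeasure μ]
    (hf : BoundedMeasurable f C) : LocallyIntegrable f μ :=
  (locallyIntegrable_const C).mono hf.measurable.aestronglyMeasurable
    (ae_of_all μ fun a => (hf.abs_le a).trans (le_abs_self C))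

theorem integral_prod_right [IsFiniteMeasure ν] {f : α → β → ℝ}
    (hf : BoundedMeasurable (Function.uncurry f) C) :
    BoundedMeasurable (fun a => ∫ b, f a b ∂ν) (C * ν.real univ) where
  measurable := hf.measurable.stronglyMeasurable.integral_prod_right.measurable
  abs_le a := by
    rw [← Real.norm_eq_abs]
    exact norm_integral_le_of_norm_le_const (ae_of_all ν fun b => hf.abs_le (a, b))

theorem tendsto_integral_sq_sub [IsFiniteMeasure μ] {F : ℕ → α → ℝ}
    (hf : BoundedMeasurable f C) (hF : ∀ n, BoundedMeasurable (F n) D)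
    (hlim : ∀ᵐ a ∂μ, Tendsto (fun n => F n a) atTop (nhds (f a))) :
    Tendsto (fun n => ∫ a, (f a - F n a) ^ 2 ∂μ) atTop (nhds 0) := by
  have hbdd (n : ℕ) := (hf.sub (hF n)).sq
  rw [← integral_zero α ℝ (μ := μ)]
  refine tendsto_integral_of_dominated_convergence (fun _ => (C + D) ^ 2)
    (fun n => (hbdd n).measurable.aestronglyMeasurable) (integrable_const _)
    (fun n => ae_of_all μ (hbdd n).abs_le) ?_
  filter_upwards [hlim] with a ha
  simpa using (ha.const_sub (f a)).pow 2

end BoundedMeasurable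

end

section VotingModel

variable {Ω τ : Type*} [MeasurableSpace Ω] [MeasurableSpace τ] {μ : Measure Ω}
  {W V : Ω → Ω → ℝ} {B C M M' T : ℝ}

/-- The right-hand side of the voting model on the space of voters `(Ω, μ)`: the rate of change of
the opinion of `x` when the opinions are `f` and the kernel is `W`. -/
def votingField (μ : Measure Ω) (W : Ω → Ω → ℝ) (f : Ω → ℝ) (x : Ω) : ℝ :=
  ∫ y, W x y * (f y - f x) ∂μ

theorem BoundedMeasurable.votingField [IsFiniteMeasure μ]
    (hW : BoundedMeasurable (Function.uncurry W) B) {u : Ω → τ → ℝ}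
    (hu : BoundedMeasurable (Function.uncurry u) M) :
    BoundedMeasurable (fun p : Ω × τ => votingField μ W (fun y => u y p.2) p.1)
      (B * (M + M) * μ.real univ) :=
  have hWq := hW.comp (φ := fun q : (Ω × τ) × Ω => (q.1.1, q.2)) (by fun_prop)
  have huq := hu.comp (φ := fun q : (Ω × τ) × Ω => (q.2, q.1.2)) (by fun_prop)
  have huq' := hu.comp (φ := fun q : (Ω × τ) × Ω => q.1) measurable_fst
  (hWq.mul (huq.sub huq')).integral_prod_right
    (f := fun (p : Ω × τ) y => W p.1 y * (u y p.2 - u p.1 p.2))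

theorem BoundedMeasurable.mul_snd_sub_fst (hW : BoundedMeasurable (Function.uncurry W) B)
    {f : Ω → ℝ} (hf : BoundedMeasurable f M) :
    BoundedMeasurable (fun p : Ω × Ω => W p.1 p.2 * (f p.2 - f p.1)) (B * (M + M)) :=
  hW.mul ((hf.comp measurable_snd).sub (hf.comp measurable_fst))

theorem sq_mul_sub_sub_mul_sub_le {w v a b c d C M : ℝ} (hv : |v| ≤ C) (ha : |a| ≤ M)
    (hb : |b| ≤ M) :
    (w * (a - b) - v * (c - d)) ^ 2 ≤
      8 * M ^ 2 * (w - v) ^ 2 + 4 * C ^ 2 * ((a - c) ^ 2 + (b - d) ^ 2) := by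
  have hab : (a - b) ^ 2 ≤ 4 * M ^ 2 := by
    have : |a - b| ≤ 2 * M := by linarith [abs_sub a b]
    linarith [sq_le_sq.2 (this.trans (le_abs_self _))]
  have hv_sq : v ^ 2 ≤ C ^ 2 := sq_le_sq.2 (hv.trans (le_abs_self C))
  calc (w * (a - b) - v * (c - d)) ^ 2
      = ((w - v) * (a - b) + v * ((a - c) + (d - b))) ^ 2 := by ring
    _ ≤ 2 * (((w - v) * (a - b)) ^ 2 + (v * ((a - c) + (d - b))) ^ 2) := add_sq_le
    _ = 2 * ((w - v) ^ 2 * (a - b) ^ 2 + v ^ 2 * ((a - c) + (d - b)) ^ 2) := by ring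
    _ ≤ 2 * ((w - v) ^ 2 * (4 * M ^ 2) + C ^ 2 * (2 * ((a - c) ^ 2 + (d - b) ^ 2))) := by
        gcongr
        exact add_sq_le
    _ = 8 * M ^ 2 * (w - v) ^ 2 + 4 * C ^ 2 * ((a - c) ^ 2 + (b - d) ^ 2) := by ring

variable [IsProbabilityMeasure μ]

theorem integral_sq_votingField_sub_le_integral_prod {f h : Ω → ℝ}
    (hW : BoundedMeasurable (Function.uncurry W) B)
    (hV : BoundedMeasurable (Function.uncurry V) C)
    (hf : BoundedMeasurable f M) (hh : BoundedMeasurable h M') :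
    ∫ x, (votingField μ W f x - votingField μ V h x) ^ 2 ∂μ ≤
      ∫ p, (W p.1 p.2 * (f p.2 - f p.1) - V p.1 p.2 * (h p.2 - h p.1)) ^ 2 ∂μ.prod μ := by
  set k : Ω → Ω → ℝ := fun x y => W x y * (f y - f x) - V x y * (h y - h x)
  have hWf := hW.mul_snd_sub_fst hf
  have hVh := hV.mul_snd_sub_fst hh
  have hk : BoundedMeasurable (Function.uncurry k) _ := hWf.sub hVh
  have hsq_le (x : Ω) :
      (votingField μ W f x - votingField μ V h x) ^ 2 ≤ ∫ y, k x y ^ 2 ∂μ := by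
    have hdiff : votingField μ W f x - votingField μ V h x = ∫ y, k x y ∂μ :=
      (integral_sub (hWf.comp measurable_prodMk_left).integrable
        (hVh.comp measurable_prodMk_left).integrable).symm
    have hk_memLp : MemLp (k x) 2 μ := (hk.comp measurable_prodMk_left).memLp 2
    simpa [hdiff] using sq_integral_le_measureReal_mul_integral_sq hk_memLp
  calc ∫ x, (votingField μ W f x - votingField μ V h x) ^ 2 ∂μ
      ≤ ∫ x, ∫ y, k x y ^ 2 ∂μ ∂μ :=
        integral_mono_of_nonneg (ae_of_all μ fun x => sq_nonneg _)
          hk.sq.integrable.integral_prod_left (ae_of_all μ hsq_le)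
    _ = ∫ p, k p.1 p.2 ^ 2 ∂μ.prod μ := (integral_prod _ hk.sq.integrable).symm

theorem integral_sq_votingField_sub_le {f h : Ω → ℝ}
    (hW : BoundedMeasurable (Function.uncurry W) B)
    (hV : BoundedMeasurable (Function.uncurry V) C)
    (hf : BoundedMeasurable f M) (hh : BoundedMeasurable h M') :
    ∫ x, (votingField μ W f x - votingField μ V h x) ^ 2 ∂μ ≤
      8 * M ^ 2 * ∫ p, (W p.1 p.2 - V p.1 p.2) ^ 2 ∂μ.prod μ +
        8 * C ^ 2 * ∫ x, (f x - h x) ^ 2 ∂μ := by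
  have hWV_int : Integrable (fun p : Ω × Ω => 8 * M ^ 2 * (W p.1 p.2 - V p.1 p.2) ^ 2)
    (μ.prod μ) := (hW.sub hV).sq.integrable.const_mul _
  have hsnd_int : Integrable (fun p : Ω × Ω => (f p.2 - h p.2) ^ 2) (μ.prod μ) :=
    ((hf.sub hh).sq.comp measurable_snd).integrable
  have hfst_int : Integrable (fun p : Ω × Ω => (f p.1 - h p.1) ^ 2) (μ.prod μ) :=
    ((hf.sub hh).sq.comp measurable_fst).integrable
  have hsum_int : Integrable
      (fun p : Ω × Ω => 4 * C ^ 2 * ((f p.2 - h p.2) ^ 2 + (f p.1 - h p.1) ^ 2)) (μ.prod μ) :=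
    (hsnd_int.add hfst_int).const_mul _
  calc ∫ x, (votingField μ W f x - votingField μ V h x) ^ 2 ∂μ
      ≤ ∫ p, (W p.1 p.2 * (f p.2 - f p.1) - V p.1 p.2 * (h p.2 - h p.1)) ^ 2 ∂μ.prod μ :=
        integral_sq_votingField_sub_le_integral_prod hW hV hf hh
    _ ≤ ∫ p, (8 * M ^ 2 * (W p.1 p.2 - V p.1 p.2) ^ 2 +
          4 * C ^ 2 * ((f p.2 - h p.2) ^ 2 + (f p.1 - h p.1) ^ 2)) ∂μ.prod μ :=
        integral_mono ((hW.mul_snd_sub_fst hf).sub (hV.mul_snd_sub_fst hh)).sq.integrable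
          (hWV_int.add hsum_int)
          fun p => sq_mul_sub_sub_mul_sub_le (hV.abs_le p) (hf.abs_le _) (hf.abs_le _)
    _ = _ := by
        rw [integral_add hWV_int hsum_int, integral_const_mul, integral_const_mul,
          integral_add hsnd_int hfst_int, integral_fun_snd fun x => (f x - h x) ^ 2,
          integral_fun_fst fun x => (f x - h x) ^ 2, probReal_univ, one_smul]
        ring

theorem BoundedMeasurable.integral_sq_sub {u v : Ω → τ → ℝ}
    (hu : BoundedMeasurable (Function.uncurry u) M)
    (hv : BoundedMeasurable (Function.uncurry v) M') :
    BoundedMeasurable (fun t => ∫ x, (u x t - v x t) ^ 2 ∂μ) ((M + M') ^ 2) := by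
  have hsq := (hu.sub hv).sq.comp measurable_swap
  simpa using hsq.integral_prod_right (ν := μ) (f := fun t x => (u x t - v x t) ^ 2)

theorem setIntegral_integral_sq_votingField_sub_le {u v : Ω → ℝ → ℝ}
    (hW : BoundedMeasurable (Function.uncurry W) B)
    (hV : BoundedMeasurable (Function.uncurry V) C)
    (hu : BoundedMeasurable (Function.uncurry u) M)
    (hv : BoundedMeasurable (Function.uncurry v) M') {t : ℝ} (ht : 0 ≤ t) :
    ∫ s in Icc 0 t, ∫ x, (votingField μ W (fun y => u y s) x -
        votingField μ V (fun y => v y s) x) ^ 2 ∂μ ≤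
      t * (8 * M ^ 2 * ∫ p, (W p.1 p.2 - V p.1 p.2) ^ 2 ∂μ.prod μ) +
        8 * C ^ 2 * ∫ s in Icc 0 t, ∫ x, (u x s - v x s) ^ 2 ∂μ := by
  have hint : IntegrableOn (fun s => 8 * C ^ 2 * ∫ x, (u x s - v x s) ^ 2 ∂μ) (Icc 0 t) :=
    (hu.integral_sq_sub hv).integrable.const_mul _
  calc ∫ s in Icc 0 t, ∫ x, (votingField μ W (fun y => u y s) x -
        votingField μ V (fun y => v y s) x) ^ 2 ∂μ
      ≤ ∫ s in Icc 0 t, (8 * M ^ 2 * ∫ p, (W p.1 p.2 - V p.1 p.2) ^ 2 ∂μ.prod μ +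
          8 * C ^ 2 * ∫ x, (u x s - v x s) ^ 2 ∂μ) :=
        integral_mono_of_nonneg (ae_of_all _ fun s => integral_nonneg fun x => sq_nonneg _)
          ((integrable_const _).add hint) (ae_of_all _ fun s =>
            integral_sq_votingField_sub_le hW hV (hu.comp measurable_prodMk_right)
              (hv.comp measurable_prodMk_right))
    _ = _ := by
        rw [integral_add (integrable_const _) hint, setIntegral_const, integral_const_mul,
          Real.volume_real_Icc_of_le ht, sub_zero, smul_eq_mul]

/-- `u` solves the voting model on the space of voters `(Ω, μ)` up to time `T`, in integral form and
with its own initial value `u · 0`, and is everywhere bounded by `M`. -/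
structure IsBoundedSolutionOn (μ : Measure Ω) (W : Ω → Ω → ℝ) (T M : ℝ) (u : Ω → ℝ → ℝ) :
    Prop where
  boundedMeasurable : BoundedMeasurable (Function.uncurry u) M
  eq_add_integral : ∀ t ∈ Icc 0 T, ∀ᵐ x ∂μ,
    u x t = u x 0 + ∫ s in Icc 0 t, votingField μ W (fun y => u y s) x

namespace IsBoundedSolutionOn

variable {u v : Ω → ℝ → ℝ}

theorem integral_sq_sub_le_add_setIntegral (hW : BoundedMeasurable (Function.uncurry W) B)
    (hV : BoundedMeasurable (Function.uncurry V) C)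
    (hu : IsBoundedSolutionOn μ W T M u) (hv : IsBoundedSolutionOn μ V T M' v)
    {t : ℝ} (ht : t ∈ Icc 0 T) :
    ∫ x, (u x t - v x t) ^ 2 ∂μ ≤ 2 * ∫ x, (u x 0 - v x 0) ^ 2 ∂μ +
      2 * t * ∫ s in Icc 0 t, ∫ x, (votingField μ W (fun y => u y s) x -
        votingField μ V (fun y => v y s) x) ^ 2 ∂μ := by
  have hWu := hW.votingField (μ := μ) hu.boundedMeasurable
  have hVv := hV.votingField (μ := μ) hv.boundedMeasurable
  have hinit : MemLp (fun x => u x 0 - v x 0) 2 μ :=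
    ((hu.boundedMeasurable.comp measurable_prodMk_right).sub
      (hv.boundedMeasurable.comp measurable_prodMk_right)).memLp 2
  have hdiff : ∀ᵐ x ∂μ, u x t - v x t = (u x 0 - v x 0) +
      ∫ s in Icc 0 t, (votingField μ W (fun y => u y s) x -
        votingField μ V (fun y => v y s) x) := by
    filter_upwards [hu.eq_add_integral t ht, hv.eq_add_integral t ht] with x hux hvx
    rw [integral_sub (hWu.comp measurable_prodMk_left).integrable
      (hVv.comp measurable_prodMk_left).integrable, hux, hvx]
    ring
  rw [integral_congr_ae (hdiff.mono fun x hx => congrArg (· ^ 2) hx)]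
  have hle := integral_sq_add_integral_le (ν := volume.restrict (Icc 0 t))
    (R := fun x s => votingField μ W (fun y => u y s) x - votingField μ V (fun y => v y s) x)
    hinit ((hWu.sub hVv).memLp 2)
  simpa [ht.1] using hle

theorem integral_sq_sub_le_add_integral (hW : BoundedMeasurable (Function.uncurry W) B)
    (hV : BoundedMeasurable (Function.uncurry V) C)
    (hu : IsBoundedSolutionOn μ W T M u) (hv : IsBoundedSolutionOn μ V T M' v)
    {t : ℝ} (ht : t ∈ Icc 0 T) :
    ∫ x, (u x t - v x t) ^ 2 ∂μ ≤
      2 * ∫ x, (u x 0 - v x 0) ^ 2 ∂μ +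
        16 * M ^ 2 * T ^ 2 * ∫ p, (W p.1 p.2 - V p.1 p.2) ^ 2 ∂μ.prod μ +
      16 * C ^ 2 * T * ∫ s in 0..t, ∫ x, (u x s - v x s) ^ 2 ∂μ := by
  obtain ⟨ht₀, htT⟩ := ht
  have henergy := integral_sq_sub_le_add_setIntegral hW hV hu hv ⟨ht₀, htT⟩
  have hfield := setIntegral_integral_sq_votingField_sub_le (μ := μ) hW hV
    hu.boundedMeasurable hv.boundedMeasurable ht₀
  rw [intervalIntegral.integral_of_le ht₀, ← integral_Icc_eq_integral_Ioc]
  set w : ℝ := ∫ p, (W p.1 p.2 - V p.1 p.2) ^ 2 ∂μ.prod μ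
  set φ : ℝ → ℝ := fun s => ∫ x, (u x s - v x s) ^ 2 ∂μ
  have : 0 ≤ w := integral_nonneg fun p => sq_nonneg _
  have : 0 ≤ ∫ s in Icc 0 t, φ s := integral_nonneg fun s => integral_nonneg fun x => sq_nonneg _
  calc φ t ≤ 2 * φ 0 + 2 * t * (t * (8 * M ^ 2 * w) + 8 * C ^ 2 * ∫ s in Icc 0 t, φ s) :=
        henergy.trans (by gcongr)
    _ = 2 * φ 0 + 16 * M ^ 2 * t ^ 2 * w + 16 * C ^ 2 * t * ∫ s in Icc 0 t, φ s := by ring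
    _ ≤ 2 * φ 0 + 16 * M ^ 2 * T ^ 2 * w + 16 * C ^ 2 * T * ∫ s in Icc 0 t, φ s := by gcongr

theorem integral_sq_sub_le (hW : BoundedMeasurable (Function.uncurry W) B)
    (hV : BoundedMeasurable (Function.uncurry V) C)
    (hu : IsBoundedSolutionOn μ W T M u) (hv : IsBoundedSolutionOn μ V T M' v)
    {t : ℝ} (ht : t ∈ Icc 0 T) :
    ∫ x, (u x t - v x t) ^ 2 ∂μ ≤
      (2 * ∫ x, (u x 0 - v x 0) ^ 2 ∂μ +
        16 * M ^ 2 * T ^ 2 * ∫ p, (W p.1 p.2 - V p.1 p.2) ^ 2 ∂μ.prod μ) *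
      Real.exp (16 * C ^ 2 * T ^ 2) := by
  have hT : 0 ≤ T := ht.1.trans ht.2
  have hgronwall := le_mul_exp_of_le_add_integral (K := 16 * C ^ 2 * T) (by positivity)
    (hu.boundedMeasurable.integral_sq_sub hv.boundedMeasurable).integrable
    (fun s hs => integral_sq_sub_le_add_integral hW hV hu hv hs) t ht
  refine hgronwall.trans (mul_le_mul_of_nonneg_left (Real.exp_le_exp.2 ?_) ?_)
  · calc 16 * C ^ 2 * T * (t - 0) ≤ 16 * C ^ 2 * T * T := by
          gcongr
          linarith [ht.2]
      _ = 16 * C ^ 2 * T ^ 2 := by ring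
  · positivity

end IsBoundedSolutionOn

end VotingModel

section BlockAverage

variable {g g' : ℝ → ℝ} {W : ℝ → ℝ → ℝ} {C : ℝ} {n : ℕ} {x : ℝ}

/-- The midpoint of the block of length `1 / n` containing `x`; blocks are, up to endpoints, the
closed balls of radius `1 / (2 * n)` around it, which is the form the Lebesgue differentiation
theorem takes. -/
def blockCenter (n : ℕ) (x : ℝ) : ℝ := (⌈(n : ℝ) * x⌉ : ℝ) / n - 1 / (2 * n)

theorem closedBall_blockCenter (n : ℕ) (x : ℝ) :
    Metric.closedBall (blockCenter n x) (1 / (2 * n)) =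
      Icc ((⌈(n : ℝ) * x⌉ : ℝ) / n - 1 / n) ((⌈(n : ℝ) * x⌉ : ℝ) / n) := by
  have hhalves : (1 : ℝ) / n = 1 / (2 * n) + 1 / (2 * n) := by ring
  rw [Real.closedBall_eq_Icc, blockCenter, hhalves, sub_sub, sub_add_cancel]

theorem blockIoc_ae_eq_closedBall (n : ℕ) (x : ℝ) :
    blockIoc n x =ᵐ[volume] Metric.closedBall (blockCenter n x) (1 / (2 * n)) := by
  rw [closedBall_blockCenter]
  exact Ioc_ae_eq_Icc

theorem blockIoc_prod_ae_eq_closedBall (n : ℕ) (x y : ℝ) :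
    (blockIoc n x ×ˢ blockIoc n y : Set (ℝ × ℝ)) =ᵐ[volume]
      Metric.closedBall (blockCenter n x, blockCenter n y) (1 / (2 * n)) := by
  rw [← closedBall_prod_same]
  exact Measure.set_prod_ae_eq (blockIoc_ae_eq_closedBall n x) (blockIoc_ae_eq_closedBall n y)

theorem volumeReal_blockIoc (n : ℕ) (x : ℝ) : volume.real (blockIoc n x) = 1 / n := by
  rw [blockIoc, Real.volume_real_Ioc_of_le (by linarith [show (0 : ℝ) ≤ 1 / n by positivity])]
  ring

theorem blockAvgG_eq_setAverage (n : ℕ) (g : ℝ → ℝ) (x : ℝ) :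
    blockAvgG n g x = ⨍ y in blockIoc n x, g y := by
  rw [setAverage_eq, volumeReal_blockIoc, one_div, inv_inv, smul_eq_mul, blockAvgG]

theorem blockAvgW_eq_setAverage (n : ℕ) (W : ℝ → ℝ → ℝ) (x y : ℝ) :
    blockAvgW n W x y = ⨍ p in blockIoc n x ×ˢ blockIoc n y, W p.1 p.2 := by
  rw [setAverage_eq, Measure.volume_eq_prod, measureReal_prod_prod, volumeReal_blockIoc,
    volumeReal_blockIoc, ← sq, one_div, inv_pow, inv_inv, smul_eq_mul, blockAvgW,
    Measure.volume_eq_prod]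

theorem mem_blockIoc (hn : 0 < n) (x : ℝ) : x ∈ blockIoc n x := by
  have hn' : (0 : ℝ) < n := Nat.cast_pos.2 hn
  constructor
  · rw [← sub_div, div_lt_iff₀ hn']
    linarith [Int.ceil_lt_add_one ((n : ℝ) * x)]
  · rw [le_div_iff₀ hn']
    linarith [Int.le_ceil ((n : ℝ) * x)]

theorem mem_closedBall_blockCenter (hn : 0 < n) (x : ℝ) :
    x ∈ Metric.closedBall (blockCenter n x) (1 / (2 * n)) := by
  rw [closedBall_blockCenter]
  exact Ioc_subset_Icc_self (mem_blockIoc hn x)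

theorem blockIoc_subset_Icc (hn : 0 < n) (hx : x ∈ Ioc 0 1) : blockIoc n x ⊆ Icc 0 1 := by
  have hn' : (0 : ℝ) < n := Nat.cast_pos.2 hn
  have hone_le : (1 : ℝ) ≤ ⌈(n : ℝ) * x⌉ :=
    mod_cast Int.one_le_ceil_iff.2 (mul_pos hn' hx.1)
  have hle : (⌈(n : ℝ) * x⌉ : ℝ) ≤ n :=
    mod_cast Int.ceil_le.2 (mul_le_of_le_one_right hn'.le hx.2)
  refine Ioc_subset_Icc_self.trans (Icc_subset_Icc ?_ ((div_le_one hn').2 hle))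
  rw [← sub_div]
  exact div_nonneg (sub_nonneg.2 hone_le) hn'.le

theorem tendsto_one_div_two_mul_nhdsGT_zero :
    Tendsto (fun n : ℕ => 1 / (2 * (n : ℝ))) atTop (nhdsWithin 0 (Ioi 0)) := by
  refine tendsto_nhdsWithin_iff.2 ⟨?_, ?_⟩
  · simpa using (tendsto_one_div_atTop_nhds_zero_nat (𝕜 := ℝ)).mul_const 2⁻¹
  · filter_upwards [eventually_gt_atTop 0] with n hn
    exact mem_Ioi.2 (by positivity)

theorem ae_tendsto_blockAvgG (hg : BoundedMeasurable g C) :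
    ∀ᵐ x, Tendsto (fun n => blockAvgG n g x) atTop (nhds (g x)) := by
  filter_upwards [IsUnifLocDoublingMeasure.ae_tendsto_average volume hg.locallyIntegrable 1]
    with x hx
  simp only [blockAvgG_eq_setAverage, setAverage_congr (blockIoc_ae_eq_closedBall _ x)]
  refine hx _ _ tendsto_one_div_two_mul_nhdsGT_zero ?_
  filter_upwards [eventually_gt_atTop 0] with n hn
  rw [one_mul]
  exact mem_closedBall_blockCenter hn x

theorem ae_tendsto_blockAvgW (hW : BoundedMeasurable (Function.uncurry W) C) :
    ∀ᵐ p : ℝ × ℝ, Tendsto (fun n => blockAvgW n W p.1 p.2) atTop (nhds (W p.1 p.2)) := by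
  filter_upwards [IsUnifLocDoublingMeasure.ae_tendsto_average volume hW.locallyIntegrable 1]
    with p hp
  simp only [blockAvgW_eq_setAverage, setAverage_congr (blockIoc_prod_ae_eq_closedBall _ p.1 p.2)]
  refine hp _ _ tendsto_one_div_two_mul_nhdsGT_zero ?_
  filter_upwards [eventually_gt_atTop 0] with n hn
  rw [one_mul, ← closedBall_prod_same]
  exact ⟨mem_closedBall_blockCenter hn p.1, mem_closedBall_blockCenter hn p.2⟩

theorem measurable_blockAvgG (n : ℕ) (g : ℝ → ℝ) : Measurable (blockAvgG n g) := by
  let F : ℤ → ℝ := fun k => n * ∫ y in Ioc ((k : ℝ) / n - 1 / n) ((k : ℝ) / n), g y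
  exact (measurable_of_countable F).comp (Int.measurable_ceil.comp (measurable_const_mul (n : ℝ)))

theorem measurable_blockAvgW (n : ℕ) (W : ℝ → ℝ → ℝ) :
    Measurable (Function.uncurry (blockAvgW n W)) := by
  let F : ℤ × ℤ → ℝ := fun k => (n : ℝ) ^ 2 * ∫ p in Ioc ((k.1 : ℝ) / n - 1 / n) ((k.1 : ℝ) / n) ×ˢ
    Ioc ((k.2 : ℝ) / n - 1 / n) ((k.2 : ℝ) / n), W p.1 p.2
  have hceil : Measurable fun x : ℝ => ⌈(n : ℝ) * x⌉ :=
    Int.measurable_ceil.comp (measurable_const_mul (n : ℝ))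
  have hF : Function.uncurry (blockAvgW n W) = F ∘ Prod.map (⌈(n : ℝ) * ·⌉) (⌈(n : ℝ) * ·⌉) := by
    ext p
    simp only [Function.uncurry, Function.comp, Prod.map, F, blockAvgW, blockIoc]
  rw [hF]
  exact (measurable_of_countable F).comp (hceil.prodMap hceil)

theorem BoundedMeasurable.blockAvgG (hg : BoundedMeasurable g C) (n : ℕ) :
    BoundedMeasurable (blockAvgG n g) C where
  measurable := measurable_blockAvgG n g
  abs_le x := by
    rw [← Real.norm_eq_abs, blockAvgG_eq_setAverage]
    exact norm_average_le ((abs_nonneg _).trans (hg.abs_le 0)) (ae_of_all _ hg.abs_le)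

theorem BoundedMeasurable.blockAvgW (hW : BoundedMeasurable (Function.uncurry W) C) (n : ℕ) :
    BoundedMeasurable (Function.uncurry (blockAvgW n W)) C where
  measurable := measurable_blockAvgW n W
  abs_le p := by
    rw [← Real.norm_eq_abs, Function.uncurry, blockAvgW_eq_setAverage]
    exact norm_average_le ((abs_nonneg _).trans (hW.abs_le 0)) (ae_of_all _ hW.abs_le)

instance : IsProbabilityMeasure mu01 := ⟨by simp [mu01]⟩

theorem blockAvgG_ae_eq (h : g =ᵐ[mu01] g') (n : ℕ) :
    blockAvgG n g =ᵐ[mu01] blockAvgG n g' := by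
  rcases n.eq_zero_or_pos with rfl | hn
  · exact ae_of_all _ fun x => by simp [blockAvgG]
  · rw [mu01, ← restrict_Ioc_eq_restrict_Icc]
    filter_upwards [ae_restrict_mem measurableSet_Ioc] with x hx
    rw [blockAvgG, blockAvgG, integral_congr_ae
      (ae_restrict_of_ae_restrict_of_subset (blockIoc_subset_Icc hn hx) h)]

theorem tendsto_integral_sq_sub_blockAvgG (hg' : BoundedMeasurable g' C)
    (h : g =ᵐ[mu01] g') :
    Tendsto (fun n => ∫ x, (g x - blockAvgG n g x) ^ 2 ∂mu01) atTop (nhds 0) := by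
  refine (hg'.tendsto_integral_sq_sub hg'.blockAvgG
    (ae_restrict_of_ae (ae_tendsto_blockAvgG hg'))).congr fun n => integral_congr_ae ?_
  filter_upwards [h, blockAvgG_ae_eq h n] with x hgx havg
  rw [hgx, havg]

theorem tendsto_integral_sq_sub_blockAvgW
    (hW : BoundedMeasurable (Function.uncurry W) C) :
    Tendsto (fun n => ∫ p, (W p.1 p.2 - blockAvgW n W p.1 p.2) ^ 2 ∂mu01.prod mu01)
      atTop (nhds 0) := by
  refine hW.tendsto_integral_sq_sub hW.blockAvgW ?_
  rw [mu01, Measure.prod_restrict, ← Measure.volume_eq_prod]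
  exact ae_restrict_of_ae (ae_tendsto_blockAvgW hW)

end BlockAverage

namespace IsSolution

variable {W : ℝ → ℝ → ℝ} {g : ℝ → ℝ} {u : ℝ → ℝ → ℝ} {B T : ℝ}

theorem ae_eq_initial (hu : IsSolution W g u) : g =ᵐ[mu01] fun x => u x 0 := by
  filter_upwards [hu.2.2 0 le_rfl] with x hx
  simpa using hx.symm

theorem exists_isBoundedSolutionOn (hu : IsSolution W g u) (hT : 0 < T) :
    ∃ M u', IsBoundedSolutionOn mu01 W T M u' ∧
      ∀ t ∈ Icc 0 T, ∀ᵐ x ∂mu01, u' x t = u x t := by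
  obtain ⟨M, hM⟩ := hu.2.1 T hT
  obtain ⟨f, hf_meas, hf_le, hf_eq⟩ := exists_measurable_abs_le_eq_of_abs_le hu.1 M
  have hfu (t : ℝ) (ht : t ∈ Icc 0 T) : ∀ᵐ x ∂mu01, f (x, t) = u x t :=
    (hM t ht).mono fun x hx => hf_eq (x, t) hx
  refine ⟨|M|, fun x t => f (x, t), ⟨⟨hf_meas, hf_le⟩, fun t ht => ?_⟩, hfu⟩
  have hfu_ae : ∀ᵐ x ∂mu01, ∀ᵐ s ∂volume.restrict (Icc 0 t), f (x, s) = u x s := by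
    rw [Measure.ae_ae_comm (p := fun x s => f (x, s) = u x s) (measurableSet_eq_fun hf_meas hu.1)]
    filter_upwards [ae_restrict_mem measurableSet_Icc] with s hs
    exact hfu s ⟨hs.1, hs.2.trans ht.2⟩
  filter_upwards [hfu_ae, hfu t ht, hfu 0 ⟨le_rfl, hT.le⟩, hu.ae_eq_initial, hu.2.2 t ht.1]
    with x hfx hfxt hfx0 hinit heq
  rw [hfxt, hfx0, heq, hinit]
  congr 1
  refine integral_congr_ae ?_
  filter_upwards [hfx, ae_restrict_mem measurableSet_Icc] with s hfxs hs
  refine integral_congr_ae ?_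
  filter_upwards [hfu s ⟨hs.1, hs.2.trans ht.2⟩] with y hfys
  rw [hfxs, hfys]

theorem exists_boundedMeasurable_ae_eq (hu : IsSolution W g u) :
    ∃ M g', BoundedMeasurable g' M ∧ g =ᵐ[mu01] g' := by
  obtain ⟨M, u', hu', hu'_eq⟩ := hu.exists_isBoundedSolutionOn one_pos
  refine ⟨M, fun x => u' x 0, hu'.boundedMeasurable.comp measurable_prodMk_right, ?_⟩
  filter_upwards [hu.ae_eq_initial, hu'_eq 0 ⟨le_rfl, zero_le_one⟩] with x hinit hx
  rw [hinit, hx]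

theorem exists_integral_sq_sub_le (hW : BoundedMeasurable (Function.uncurry W) B)
    (hu : IsSolution W g u) (hT : 0 < T) :
    ∃ M, ∀ {V h v C}, BoundedMeasurable (Function.uncurry V) C → IsSolution V h v →
      ∀ t ∈ Icc 0 T, ∫ x, (u x t - v x t) ^ 2 ∂mu01 ≤
        (2 * ∫ x, (g x - h x) ^ 2 ∂mu01 +
          16 * M ^ 2 * T ^ 2 * ∫ p, (W p.1 p.2 - V p.1 p.2) ^ 2 ∂mu01.prod mu01) *
        Real.exp (16 * C ^ 2 * T ^ 2) := by
  obtain ⟨M, u', hu', hu'_eq⟩ := hu.exists_isBoundedSolutionOn hT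
  refine ⟨M, fun {V h v C} hV hv t ht => ?_⟩
  obtain ⟨M', v', hv', hv'_eq⟩ := hv.exists_isBoundedSolutionOn hT
  have hdiff (s : ℝ) (hs : s ∈ Icc 0 T) :
      ∫ x, (u' x s - v' x s) ^ 2 ∂mu01 = ∫ x, (u x s - v x s) ^ 2 ∂mu01 := by
    refine integral_congr_ae ?_
    filter_upwards [hu'_eq s hs, hv'_eq s hs] with x hux hvx
    rw [hux, hvx]
  have hinit : ∫ x, (g x - h x) ^ 2 ∂mu01 = ∫ x, (u x 0 - v x 0) ^ 2 ∂mu01 := by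
    refine integral_congr_ae ?_
    filter_upwards [hu.ae_eq_initial, hv.ae_eq_initial] with x hgx hhx
    rw [hgx, hhx]
  have hstab := hu'.integral_sq_sub_le hW hV hv' ht
  rwa [hdiff t ht, hdiff 0 ⟨le_rfl, hT.le⟩, ← hinit] at hstab

end IsSolution

theorem blockAvg_solutions_converge_general {W : ℝ → ℝ → ℝ} {C : ℝ}
    (hW : Measurable (Function.uncurry W)) (hWC : ∀ x y, |W x y| ≤ C)
    {g : ℝ → ℝ} {u : ℝ → ℝ → ℝ} (hu : IsSolution W g u) {un : ℕ → ℝ → ℝ → ℝ}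
    (hun : ∀ n : ℕ, IsSolution (blockAvgW n W) (blockAvgG n g) (un n)) :
    ∀ T > (0 : ℝ), ∀ ε > (0 : ℝ), ∃ N : ℕ, ∀ n ≥ N, ∀ t ∈ Icc 0 T,
      L2normI (fun x => u x t - un n x t) ≤ ε := by
  intro T hT ε hε
  have hW' : BoundedMeasurable (Function.uncurry W) C := ⟨hW, fun p => hWC p.1 p.2⟩
  obtain ⟨M, hstab⟩ := hu.exists_integral_sq_sub_le hW' hT
  obtain ⟨D, g', hg', hgg'⟩ := hu.exists_boundedMeasurable_ae_eq
  have hlim : Tendsto (fun n => (2 * ∫ x, (g x - blockAvgG n g x) ^ 2 ∂mu01 +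
      16 * M ^ 2 * T ^ 2 * ∫ p, (W p.1 p.2 - blockAvgW n W p.1 p.2) ^ 2 ∂mu01.prod mu01) *
        Real.exp (16 * C ^ 2 * T ^ 2)) atTop (nhds 0) := by
    simpa using (((tendsto_integral_sq_sub_blockAvgG hg' hgg').const_mul 2).add
      ((tendsto_integral_sq_sub_blockAvgW hW').const_mul (16 * M ^ 2 * T ^ 2))).mul_const
        (Real.exp (16 * C ^ 2 * T ^ 2))
  obtain ⟨N, hN⟩ := eventually_atTop.1 (hlim.eventually_le_const (pow_pos hε 2))
  exact ⟨N, fun n hn t ht => Real.sqrt_le_iff.2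
    ⟨hε.le, (hstab (hW'.blockAvgW n) (hun n) t ht).trans (hN n hn)⟩⟩

/-- Solutions for the block averages converge to the continuum solution in
`C([0,T]; L²([0,1]))`-norm. -/
theorem blockAvg_solutions_converge
    (W : ℝ → ℝ → ℝ) (g : ℝ → ℝ) (hW : IsKernel W) (hg : IsLinf g)
    (u : ℝ → ℝ → ℝ) (hu : IsSolution W g u)
    (un : ℕ → ℝ → ℝ → ℝ)
    (hun : ∀ n : ℕ, IsSolution (blockAvgW n W) (blockAvgG n g) (un n)) :
    ∀ T > (0:ℝ), ∀ ε > (0:ℝ), ∃ N : ℕ, ∀ n ≥ N, ∀ t ∈ Set.Icc (0:ℝ) T,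
      L2normI (fun x => u x t - un n x t) ≤ ε :=
  blockAvg_solutions_converge_general hW.1 (fun x y => abs_le.2 (hW.2.2 x y)) hu hun

end
end

section
/- Let {J_i}_{i∈I} be a countable partition of [0,1] into intervals with λ(J_i) > 0, and let W be a kernel such that W(x,y) = 0 for almost every pair (x,y) with x and y in different intervals of the partition, and such that for each i ∈ I the restriction of W to J_i × J_i is connected, i.e. for every measurable S ⊆ J_i with 0 < λ(S) < λ(J_i) one has ∫_{S×(J_i∖S)} |W(x,y)| dx dy > 0. Let g ∈ L∞([0,1]) and let u be the solution of the continuum voting model IVP for (W, g). If u reaches consensus on [0,1], then there is a constant C such that (1/λ(J_i)) ∫_{J_i} g(y) dy = C for every i ∈ I. -/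
open MeasureTheory Filter Set

noncomputable section

/-!
The flow conserves the mass of every set `A` decoupled from the rest of the space. Over such a set
the interaction term involves only points of `A`, and by symmetry of `W` the integrand
`W x y * (u y s - u x s)` is antisymmetric in `x` and `y`, so it integrates to zero over `A × A`.
Hence the average of `u · t` over `A` equals that of `g` at all times. The same applies to the
whole interval. At consensus the average of `u · t` over `A` is arbitrarily close to its average
over `[0,1]`, so the two averages of `g` coincide: the common value of the averages over the
blocks is the average of `g` over `[0,1]`.
-/

section Integration

variable {X E : Type*} [MeasurableSpace X] [NormedAddCommGroup E] [NormedSpace ℝ E]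

lemma integral_integral_eq_zero_of_antisymm {μ : Measure X} [SFinite μ] {K : X → X → E}
    (hK : Integrable (Function.uncurry K) (μ.prod μ)) (hanti : ∀ x y, K x y = -K y x) :
    ∫ x, ∫ y, K x y ∂μ ∂μ = 0 := by
  have : IsAddTorsionFree E := .of_isTorsionFree ℝ E
  refine self_eq_neg.mp ?_
  calc ∫ x, ∫ y, K x y ∂μ ∂μ
      = ∫ y, ∫ x, K x y ∂μ ∂μ := integral_integral_swap hK
    _ = ∫ y, ∫ x, -K y x ∂μ ∂μ := by simp only [← hanti]
    _ = -∫ x, ∫ y, K x y ∂μ ∂μ := by simp only [integral_neg]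

lemma dist_average_average_le [CompleteSpace E] {μ ν : Measure X} [IsFiniteMeasure μ] [NeZero μ]
    [IsFiniteMeasure ν] [NeZero ν] {f : X → E} {ε : ℝ} (hμ : Integrable f μ)
    (hν : Integrable f ν) (hf : ∀ᵐ p ∂μ.prod ν, dist (f p.1) (f p.2) ≤ ε) :
    dist (⨍ x, f x ∂μ) (⨍ y, f y ∂ν) ≤ ε := by
  refine (convex_closedBall _ ε).average_mem Metric.isClosed_closedBall ?_ hμ
  filter_upwards [Measure.ae_ae_of_ae_prod hf] with x hx
  rw [Metric.mem_closedBall']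
  refine (convex_closedBall (f x) ε).average_mem Metric.isClosed_closedBall ?_ hν
  filter_upwards [hx] with y hy
  rwa [Metric.mem_closedBall']

end Integration

section KernelLaplacian

variable {X T : Type*} [MeasurableSpace X] [MeasurableSpace T] {μ : Measure X} {τ : Measure T}
  {W : X → X → ℝ} {c : ℝ}

/-- The nonlocal Laplacian `f ↦ ∫ W(·,y) (f(y) - f(·)) dμ(y)` driving the voting model. The measure
is a parameter so that the interaction can be restricted to a subset. -/
def kernelLaplacian (μ : Measure X) (W : X → X → ℝ) (f : X → ℝ) (x : X) : ℝ :=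
  ∫ y, W x y * (f y - f x) ∂μ

/-- The set `A` does not interact with its complement through `W`: the kernel vanishes almost
everywhere on `A × Aᶜ`. -/
def IsDecoupled (μ : Measure X) (W : X → X → ℝ) (A : Set X) : Prop :=
  ∀ᵐ x ∂μ.restrict A, ∀ᵐ y ∂μ, y ∉ A → W x y = 0

lemma isDecoupled_univ : IsDecoupled μ W univ :=
  Eventually.of_forall fun _ => Eventually.of_forall fun y hy => absurd (mem_univ y) hy

lemma isDecoupled_of_ae_cover [SFinite μ] {I : Type*} {J : I → Set X}
    (hcover : ∀ᵐ x ∂μ, x ∈ ⋃ i, J i)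
    (hW : ∀ᵐ p ∂μ.prod μ, ∀ i j, i ≠ j → p.1 ∈ J i → p.2 ∈ J j → W p.1 p.2 = 0)
    {i : I} (hi : MeasurableSet (J i)) : IsDecoupled μ W (J i) := by
  rw [IsDecoupled, ae_restrict_iff' hi]
  filter_upwards [Measure.ae_ae_of_ae_prod hW] with x hWx hxi
  filter_upwards [hWx, hcover] with y hWxy hy hyi
  obtain ⟨j, hyj⟩ := mem_iUnion.mp hy
  exact hWxy i j (fun hij => hyi (hij ▸ hyj)) hxi hyj

lemma IsDecoupled.ae_kernelLaplacian_restrict_eq {A : Set X} (hA : IsDecoupled μ W A) :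
    ∀ᵐ x ∂μ.restrict A, ∀ f,
      kernelLaplacian (μ.restrict A) W f x = kernelLaplacian μ W f x := by
  filter_upwards [hA] with x hx f
  refine setIntegral_eq_integral_of_ae_compl_eq_zero ?_
  filter_upwards [hx] with y hy hyA
  rw [hy hyA, zero_mul]

lemma integral_kernelLaplacian_eq_zero [IsFiniteMeasure μ]
    (hWm : Measurable (Function.uncurry W)) (hWsymm : ∀ x y, W x y = W y x)
    (hWb : ∀ x y, ‖W x y‖ ≤ c) {f : X → ℝ} (hf : Integrable f μ) :
    ∫ x, kernelLaplacian μ W f x ∂μ = 0 := by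
  refine integral_integral_eq_zero_of_antisymm ?_ fun x y => by rw [hWsymm x y]; ring
  exact ((hf.comp_snd μ).sub (hf.comp_fst μ)).bdd_mul hWm.aestronglyMeasurable
    (Eventually.of_forall fun p => hWb p.1 p.2)

lemma integrable_kernelLaplacian [IsFiniteMeasure μ] [SFinite τ]
    (hWm : Measurable (Function.uncurry W)) (hWb : ∀ x y, ‖W x y‖ ≤ c) {u : X → T → ℝ}
    (hu : Integrable (Function.uncurry u) (μ.prod τ)) :
    Integrable (Function.uncurry fun x s => kernelLaplacian μ W (u · s) x) (μ.prod τ) := by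
  have hux : Integrable (fun q : (X × T) × X => u q.1.1 q.1.2) ((μ.prod τ).prod μ) :=
    hu.comp_fst μ
  have huy : Integrable (fun q : (X × T) × X => u q.2 q.1.2) ((μ.prod τ).prod μ) :=
    (measurePreserving_prodAssoc μ τ μ).integrable_comp_of_integrable (hu.swap.comp_snd μ)
  have hWxy : Measurable fun q : (X × T) × X => W q.1.1 q.2 := by fun_prop
  exact ((huy.sub hux).bdd_mul hWxy.aestronglyMeasurable
    (Eventually.of_forall fun q => hWb q.1.1 q.2)).integral_prod_left

lemma integral_integral_kernelLaplacian_eq_zero [IsFiniteMeasure μ] [SFinite τ]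
    (hWm : Measurable (Function.uncurry W)) (hWsymm : ∀ x y, W x y = W y x)
    (hWb : ∀ x y, ‖W x y‖ ≤ c) {u : X → T → ℝ}
    (hu : Integrable (Function.uncurry u) (μ.prod τ)) :
    ∫ x, ∫ s, kernelLaplacian μ W (u · s) x ∂τ ∂μ = 0 := by
  rw [integral_integral_swap (integrable_kernelLaplacian hWm hWb hu)]
  refine integral_eq_zero_of_ae ?_
  filter_upwards [hu.prod_left_ae] with s hs
  exact integral_kernelLaplacian_eq_zero hWm hWsymm hWb hs

lemma IsDecoupled.setIntegral_eq_of_ae_eq_add_integral [IsFiniteMeasure μ] [SFinite τ] {A : Set X}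
    (hA : IsDecoupled μ W A) (hWm : Measurable (Function.uncurry W))
    (hWsymm : ∀ x y, W x y = W y x) (hWb : ∀ x y, ‖W x y‖ ≤ c) {u : X → T → ℝ} {g v : X → ℝ}
    (hu : Integrable (Function.uncurry u) (μ.prod τ)) (hv : Integrable v μ)
    (hvg : ∀ᵐ x ∂μ, v x = g x + ∫ s, kernelLaplacian μ W (u · s) x ∂τ) :
    ∫ x in A, v x ∂μ = ∫ x in A, g x ∂μ := by
  have huA : Integrable (Function.uncurry u) ((μ.restrict A).prod τ) :=
    hu.mono_measure (Measure.prod_mono Measure.restrict_le_self le_rfl)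
  have hgA : ∀ᵐ x ∂μ.restrict A,
      g x = v x - ∫ s, kernelLaplacian (μ.restrict A) W (u · s) x ∂τ := by
    filter_upwards [ae_restrict_of_ae hvg, hA.ae_kernelLaplacian_restrict_eq] with x hx hLx
    simp only [hLx, hx, add_sub_cancel_right]
  have hLA : Integrable (fun x => ∫ s, kernelLaplacian (μ.restrict A) W (u · s) x ∂τ)
      (μ.restrict A) := (integrable_kernelLaplacian hWm hWb huA).integral_prod_left
  rw [integral_congr_ae hgA, integral_sub hv.restrict hLA,
    integral_integral_kernelLaplacian_eq_zero hWm hWsymm hWb huA, sub_zero]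

end KernelLaplacian

instance inst_s11 : IsProbabilityMeasure mu01 := ⟨by simp [mu01]⟩

namespace IsSolution

variable {W : ℝ → ℝ → ℝ} {g : ℝ → ℝ} {u : ℝ → ℝ → ℝ} {t : ℝ}

lemma exists_ae_abs_le (hu : IsSolution W g u) (t : ℝ) :
    ∃ M : ℝ, ∀ s ∈ Icc 0 t, ∀ᵐ x ∂mu01, |u x s| ≤ M := by
  obtain ⟨M, hM⟩ := hu.2.1 (max t 1) (by positivity)
  exact ⟨M, fun s hs => hM s ⟨hs.1, hs.2.trans (le_max_left t 1)⟩⟩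

lemma integrable_apply (hu : IsSolution W g u) (ht : 0 ≤ t) :
    Integrable (fun x => u x t) mu01 := by
  obtain ⟨M, hM⟩ := hu.exists_ae_abs_le t
  exact .of_bound hu.1.of_uncurry_right.aestronglyMeasurable M (hM t ⟨ht, le_rfl⟩)

lemma integrable_uncurry (hu : IsSolution W g u) (t : ℝ) :
    Integrable (Function.uncurry u) (mu01.prod (volume.restrict (Icc 0 t))) := by
  obtain ⟨M, hM⟩ := hu.exists_ae_abs_le t
  have hmeas : MeasurableSet {p : ℝ × ℝ | |u p.1 p.2| ≤ M} :=
    measurableSet_le hu.1.abs measurable_const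
  refine .of_bound hu.1.aestronglyMeasurable M ?_
  exact (Measure.ae_prod_iff_ae_ae hmeas).mpr <|
    (Measure.ae_ae_comm hmeas).mpr <| ae_restrict_of_forall_mem measurableSet_Icc hM

lemma setIntegral_eq_initial (hu : IsSolution W g u) (hW : IsKernel W) {A : Set ℝ}
    (hA : IsDecoupled mu01 W A) (ht : 0 ≤ t) :
    ∫ x in A, u x t ∂mu01 = ∫ x in A, g x ∂mu01 :=
  hA.setIntegral_eq_of_ae_eq_add_integral hW.1 hW.2.1 (fun x y => abs_le.mpr (hW.2.2 x y))
    (hu.integrable_uncurry t) (hu.integrable_apply ht) (hu.2.2 t ht)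

lemma setAverage_eq_initial (hu : IsSolution W g u) (hW : IsKernel W) {A : Set ℝ}
    (hA : IsDecoupled mu01 W A) (ht : 0 ≤ t) :
    ⨍ x in A, u x t ∂mu01 = ⨍ x in A, g x ∂mu01 := by
  rw [setAverage_eq, setAverage_eq, hu.setIntegral_eq_initial hW hA ht]

lemma average_eq_initial (hu : IsSolution W g u) (hW : IsKernel W) (ht : 0 ≤ t) :
    ⨍ x, u x t ∂mu01 = ⨍ x, g x ∂mu01 := by
  simpa only [Measure.restrict_univ] using hu.setAverage_eq_initial hW isDecoupled_univ ht

lemma setAverage_initial_eq_average (hu : IsSolution W g u) (hW : IsKernel W) {A : Set ℝ}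
    (hA : IsDecoupled mu01 W A) (hApos : mu01 A ≠ 0) (hcons : ReachesConsensusOn u (Icc 0 1)) :
    ⨍ x in A, g x ∂mu01 = ⨍ x, g x ∂mu01 := by
  have : NeZero (mu01.restrict A) := ⟨by rwa [Ne, Measure.restrict_eq_zero]⟩
  refine eq_of_forall_dist_le fun ε hε => ?_
  obtain ⟨T, hT⟩ := hcons ε hε
  have ht : 0 ≤ max T 0 := le_max_right T 0
  have hclose : ∀ᵐ p ∂(mu01.restrict A).prod mu01, dist (u p.1 (max T 0)) (u p.2 (max T 0)) ≤ ε :=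
    (Measure.absolutelyContinuous_restrict.prod .rfl).ae_le (hT _ (le_max_left T 0))
  rw [← hu.setAverage_eq_initial hW hA ht, ← hu.average_eq_initial hW ht]
  exact dist_average_average_le (hu.integrable_apply ht).restrict (hu.integrable_apply ht) hclose

end IsSolution

lemma isDecoupled_mu01_of_iUnion_eq_Icc {I : Type*} {J : I → Set ℝ}
    (hJcover : ⋃ i, J i = Icc 0 1) {W : ℝ → ℝ → ℝ}
    (hW : ∀ᵐ p : ℝ × ℝ, ∀ i j, i ≠ j → p.1 ∈ J i → p.2 ∈ J j → W p.1 p.2 = 0)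
    {i : I} (hi : MeasurableSet (J i)) : IsDecoupled mu01 W (J i) := by
  refine isDecoupled_of_ae_cover ?_
    ((Measure.absolutelyContinuous_restrict.prod Measure.absolutelyContinuous_restrict).ae_le hW) hi
  rw [hJcover]
  exact ae_restrict_mem measurableSet_Icc

theorem consensus_necessary_condition_general {W : ℝ → ℝ → ℝ} (hW : IsKernel W) {A : Set ℝ}
    (hAsub : A ⊆ Icc 0 1) (hApos : 0 < volume A) (hA : IsDecoupled mu01 W A) {g : ℝ → ℝ}
    {u : ℝ → ℝ → ℝ} (hu : IsSolution W g u) (hcons : ReachesConsensusOn u (Icc 0 1)) :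
    (1 / (volume A).toReal) * ∫ y in A, g y = ∫ y in Icc 0 1, g y := by
  have hmuA : mu01 A ≠ 0 := by
    rw [mu01, Measure.restrict_eq_self _ hAsub]
    exact hApos.ne'
  calc (1 / (volume A).toReal) * ∫ y in A, g y
      = ⨍ y in A, g y := by rw [setAverage_eq, smul_eq_mul, one_div, measureReal_def]
    _ = ⨍ y in A, g y ∂mu01 := by rw [mu01, Measure.restrict_restrict_of_subset hAsub]
    _ = ⨍ y, g y ∂mu01 := hu.setAverage_initial_eq_average hW hA hmuA hcons
    _ = ∫ y in Icc 0 1, g y := average_eq_integral mu01 g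

/-- Necessary condition for consensus: the averages of `g` over the connected
components must all coincide. -/
theorem consensus_necessary_condition {I : Type*} [Countable I]
    (J : I → Set ℝ)
    (hJint : ∀ i, (J i).OrdConnected)
    (hJdisj : Pairwise (Function.onFun Disjoint J))
    (hJcover : (⋃ i, J i) = Set.Icc (0:ℝ) 1)
    (hpos : ∀ i, 0 < volume (J i))
    (W : ℝ → ℝ → ℝ) (hW : IsKernel W)
    (hWblock : ∀ᵐ p : ℝ × ℝ ∂(volume : Measure (ℝ × ℝ)),
      ∀ i j, i ≠ j → p.1 ∈ J i → p.2 ∈ J j → W p.1 p.2 = 0)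
    (hconn : ∀ i, ∀ S : Set ℝ, MeasurableSet S → S ⊆ J i →
      0 < volume S → volume S < volume (J i) →
      0 < ∫ p in S ×ˢ (J i \ S), |W p.1 p.2|)
    (g : ℝ → ℝ) (hg : IsLinf g)
    (u : ℝ → ℝ → ℝ) (hu : IsSolution W g u)
    (hcons : ReachesConsensusOn u (Set.Icc (0:ℝ) 1)) :
    ∃ C : ℝ, ∀ i, (1 / (volume (J i)).toReal) * ∫ y in J i, g y = C := by
  exact ⟨_, fun i => consensus_necessary_condition_general hW (hJcover ▸ subset_iUnion J i) (hpos i)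
    (isDecoupled_mu01_of_iUnion_eq_Icc hJcover hWblock (hJint i).measurableSet) hu hcons⟩

end
end

section
/- Let W be a kernel and let A and B be maximal twin-sets of W. If A ∩ B ≠ ∅, then A and B agree up to a Lebesgue-null set, i.e. λ(A Δ B) = 0. Equivalently, two maximal twin-sets that do not agree up to a null set are disjoint. -/
open MeasureTheory Filter Set

noncomputable section

/-- `f` is a multiple of `g` along `l`: some constant `c` satisfies `f = c * g` eventually along
`l`. With `l = ae mu01` this relates the rows of a kernel over a twin-set. The constant may be zero,
so the relation is not symmetric. -/
def IsMultipleAlong {Y R : Type*} [Mul R] (l : Filter Y) (f g : Y → R) : Prop :=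
  ∃ c : R, ∀ᶠ y in l, f y = c * g y

theorem IsMultipleAlong.trans {Y R : Type*} [Semigroup R] {l : Filter Y} {f g h : Y → R}
    (hfg : IsMultipleAlong l f g) (hgh : IsMultipleAlong l g h) : IsMultipleAlong l f h := by
  obtain ⟨c, hc⟩ := hfg
  obtain ⟨d, hd⟩ := hgh
  refine ⟨c * d, ?_⟩
  filter_upwards [hc, hd] with y hfy hgy
  rw [hfy, hgy, mul_assoc]

theorem forall_mem_union_rel_of_inter_nonempty {α : Type*} {r : α → α → Prop}
    (r_trans : ∀ {x y z}, r x y → r y z → r x z) {s t : Set α}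
    (hs : ∀ x ∈ s, ∀ y ∈ s, r x y) (ht : ∀ x ∈ t, ∀ y ∈ t, r x y) (hst : (s ∩ t).Nonempty) :
    ∀ x ∈ s ∪ t, ∀ y ∈ s ∪ t, r x y := by
  obtain ⟨z, hzs, hzt⟩ := hst
  have rel_z : ∀ x ∈ s ∪ t, r x z := fun x hx => hx.elim (hs x · z hzs) (ht x · z hzt)
  have z_rel : ∀ y ∈ s ∪ t, r z y := fun y hy => hy.elim (hs z hzs y) (ht z hzt y)
  exact fun x hx y hy => r_trans (rel_z x hx) (z_rel y hy)

section TwinSets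

variable {W : ℝ → ℝ → ℝ} {A B : Set ℝ}

theorem isTwinSet_iff_isMultipleAlong :
    IsTwinSet W A ↔ MeasurableSet A ∧ A ⊆ Icc 0 1 ∧ 0 < volume A ∧
      ∀ x ∈ A, ∀ x' ∈ A, IsMultipleAlong (ae mu01) (W x) (W x') := by
  refine and_congr_right' <| and_congr_right' <| and_congr_right' ⟨?_, fun h => ?_⟩
  · rintro ⟨a, ha⟩ x hx x' hx'
    exact ⟨a x x', ha x hx x' hx'⟩
  · choose! a ha using h
    exact ⟨a, ha⟩

theorem IsTwinSet.union (hA : IsTwinSet W A) (hB : IsTwinSet W B) (hAB : (A ∩ B).Nonempty) :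
    IsTwinSet W (A ∪ B) := by
  rw [isTwinSet_iff_isMultipleAlong] at hA hB ⊢
  obtain ⟨measurable_A, A_subset, A_pos, A_rows⟩ := hA
  obtain ⟨measurable_B, B_subset, -, B_rows⟩ := hB
  exact ⟨measurable_A.union measurable_B, union_subset A_subset B_subset,
    A_pos.trans_le (measure_mono subset_union_left),
    forall_mem_union_rel_of_inter_nonempty IsMultipleAlong.trans A_rows B_rows hAB⟩

theorem IsMaximalTwinSet.ae_eq_of_subset (hA : IsMaximalTwinSet W A) (hB : IsTwinSet W B)
    (hAB : A ⊆ B) : B =ᵐ[volume] A :=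
  measure_symmDiff_eq_zero_iff.mp (hA.2 B hB hAB)

theorem maximal_twin_sets_disjoint_general (hA : IsMaximalTwinSet W A)
    (hB : IsMaximalTwinSet W B) (hAB : (A ∩ B).Nonempty) : volume (symmDiff A B) = 0 := by
  have union_twin : IsTwinSet W (A ∪ B) := hA.1.union hB.1 hAB
  have union_ae_eq_A : (A ∪ B : Set ℝ) =ᵐ[volume] A :=
    hA.ae_eq_of_subset union_twin subset_union_left
  have union_ae_eq_B : (A ∪ B : Set ℝ) =ᵐ[volume] B :=
    hB.ae_eq_of_subset union_twin subset_union_right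
  exact measure_symmDiff_eq_zero_iff.mpr (union_ae_eq_A.symm.trans union_ae_eq_B)

end TwinSets

/-- Two maximal twin-sets that intersect agree up to a null set. -/
theorem maximal_twin_sets_disjoint (W : ℝ → ℝ → ℝ) (hW : IsKernel W)
    (A B : Set ℝ) (hA : IsMaximalTwinSet W A) (hB : IsMaximalTwinSet W B)
    (hAB : (A ∩ B).Nonempty) :
    volume (symmDiff A B) = 0 :=
  maximal_twin_sets_disjoint_general hA hB hAB

end
end

section
/- Let W be a kernel with a twin-set A, witnessed by a function a : A × A → ℝ, and let d_W(x) = ∫₀¹ W(x,y) dy be the normalised degree function of W. Then either d_W(x) = 0 for all x ∈ A, or d_W(x) ≠ 0 for all x ∈ A; and in the latter case a(x,x') = d_W(x)/d_W(x') for all x, x' ∈ A. -/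
open MeasureTheory Filter Set

noncomputable section

section General

variable {X Y K : Type*}

theorem forall_eq_zero_or_forall_eq_div_of_forall_eq_mul [GroupWithZero K] {A : Set X} {d : X → K}
    {a : X → X → K} (hd : ∀ x ∈ A, ∀ x' ∈ A, d x = a x x' * d x') :
    (∀ x ∈ A, d x = 0) ∨
      ((∀ x ∈ A, d x ≠ 0) ∧ ∀ x ∈ A, ∀ x' ∈ A, a x x' = d x / d x') := by
  by_cases hzero : ∃ x' ∈ A, d x' = 0
  · obtain ⟨x', hx', hdx'⟩ := hzero
    exact .inl fun x hx => by rw [hd x hx x' hx', hdx', mul_zero]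
  · have hne : ∀ x ∈ A, d x ≠ 0 := fun x hx hdx => hzero ⟨x, hx, hdx⟩
    exact .inr ⟨hne, fun x hx x' hx' => eq_div_of_mul_eq (hne x' hx') (hd x hx x' hx').symm⟩

theorem integral_eq_mul_integral_of_ae_eq_mul [MeasurableSpace Y] [NonUnitalNormedRing K]
    [NormedSpace ℝ K] [IsScalarTower ℝ K K] [SMulCommClass ℝ K K] {μ : Measure Y} {f g : Y → K}
    {c : K} (hg : Integrable g μ) (hfg : ∀ᵐ y ∂μ, f y = c * g y) :
    ∫ y, f y ∂μ = c * ∫ y, g y ∂μ :=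
  (integral_congr_ae hfg).trans (integral_const_mul_of_integrable hg)

theorem twin_set_degree_dichotomy_general [MeasurableSpace Y] [NormedDivisionRing K]
    [NormedAlgebra ℝ K] {μ : Measure Y} {W : X → Y → K} {A : Set X} {a : X → X → K}
    (hW : ∀ x ∈ A, Integrable (W x) μ)
    (ha : ∀ x ∈ A, ∀ x' ∈ A, ∀ᵐ y ∂μ, W x y = a x x' * W x' y) :
    (∀ x ∈ A, ∫ y, W x y ∂μ = 0) ∨
      ((∀ x ∈ A, ∫ y, W x y ∂μ ≠ 0) ∧
        ∀ x ∈ A, ∀ x' ∈ A, a x x' = (∫ y, W x y ∂μ) / ∫ y, W x' y ∂μ) :=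
  forall_eq_zero_or_forall_eq_div_of_forall_eq_mul fun x hx x' hx' =>
    integral_eq_mul_integral_of_ae_eq_mul (hW x' hx') (ha x hx x' hx')

end General

theorem IsKernel.integrable {W : ℝ → ℝ → ℝ} (hW : IsKernel W) (μ : Measure ℝ) [IsFiniteMeasure μ]
    (x : ℝ) : Integrable (W x) μ := by
  obtain ⟨hmeas, -, hmem⟩ := hW
  exact .of_mem_Icc (-1) 1 hmeas.of_uncurry_left.aemeasurable (ae_of_all μ (hmem x))

/-- Degree dichotomy on a twin-set: the normalised degree vanishes on all of `A` or
on none of it, and in the latter case the twin function is a ratio of degrees. -/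
theorem twin_set_degree_dichotomy (W : ℝ → ℝ → ℝ) (hW : IsKernel W)
    (A : Set ℝ) (hAmeas : MeasurableSet A) (hAsub : A ⊆ Set.Icc (0:ℝ) 1)
    (hApos : 0 < volume A)
    (a : ℝ → ℝ → ℝ)
    (ha : ∀ x ∈ A, ∀ x' ∈ A, ∀ᵐ y ∂mu01, W x y = a x x' * W x' y) :
    (∀ x ∈ A, degW W x = 0) ∨
    ((∀ x ∈ A, degW W x ≠ 0) ∧
      ∀ x ∈ A, ∀ x' ∈ A, a x x' = degW W x / degW W x') := by
  exact twin_set_degree_dichotomy_general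
    (fun x _ => hW.integrable (volume.restrict (Set.Icc 0 1)) x) ha

end
end

section
/- Fix 0 < r < 1/2 and define the kernel W_r(x,y) = −1 if x < r and y < r, and W_r(x,y) = 1 otherwise. Let g ∈ L∞([0,1]) satisfy ∫₀ʳ g(y) dy = 0 and ∫ᵣ¹ g(y) dy = 0. Then the function u defined by u(x,t) = g(x) e^{−(1−2r)t} for x < r and u(x,t) = g(x) e^{−t} for x ≥ r is the solution of the continuum voting model IVP for (W_r, g), and u reaches consensus on [0,1] with lim_{t→∞} u(x,t) = 0 for every x ∈ [0,1]. -/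
open MeasureTheory Filter Set

noncomputable section

/-!
Let `u x t = g x * exp (-d x * t)`, where `d` is the degree function of the kernel `W`. If
`∫ W x y * u y s dy = 0` at all times `s`, the right-hand side of the voting model at `(x, s)` is
`-d x * u x s`, so `u` solves the initial value problem; and if `d ≥ δ > 0`, it decays uniformly
like `exp (-δ * t)`. The kernel `W_r` has degree `1 - 2 * r` to the left of `r` and `1` to the
right, and both `W_r x` and `d` are constant on each of these two blocks, so the vanishing of the
integral of `g` on each block gives the cancellation.
-/

theorem tendsto_exp_neg_mul_atTop {k : ℝ} (hk : 0 < k) :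
    Tendsto (fun t => Real.exp (-k * t)) atTop (nhds 0) :=
  Real.tendsto_exp_atBot.comp (tendsto_id.const_mul_atTop_of_neg (neg_neg_of_pos hk))

theorem integral_Icc_neg_mul_exp (k c : ℝ) {t : ℝ} (ht : 0 ≤ t) :
    ∫ s in Icc (0 : ℝ) t, -k * (c * Real.exp (-k * s)) = c * Real.exp (-k * t) - c := by
  have hderiv (s : ℝ) :
      HasDerivAt (fun s => c * Real.exp (-k * s)) (-k * (c * Real.exp (-k * s))) s :=
    (((hasDerivAt_id s).const_mul (-k)).exp.const_mul c).congr_deriv (by simp only [id]; ring)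
  rw [integral_Icc_eq_integral_Ioc, ← intervalIntegral.integral_of_le ht,
    intervalIntegral.integral_eq_sub_of_hasDerivAt (fun s _ => hderiv s)
      (Continuous.intervalIntegrable (by fun_prop) _ _)]
  simp

theorem setIntegral_Icc_ite_lt {E : Type*} [NormedAddCommGroup E] [NormedSpace ℝ E]
    {μ : Measure ℝ} [NullSingletonClass μ] {a r b : ℝ} {f h : ℝ → E} (har : a ≤ r) (hrb : r ≤ b)
    (hf : IntegrableOn f (Icc a r) μ) (hh : IntegrableOn h (Icc r b) μ) :
    ∫ y in Icc a b, (if y < r then f y else h y) ∂μ =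
      ∫ y in Icc a r, f y ∂μ + ∫ y in Icc r b, h y ∂μ := by
  have hleft : EqOn (fun y => if y < r then f y else h y) f (Ico a r) :=
    fun y hy => if_pos hy.2
  have hright : EqOn (fun y => if y < r then f y else h y) h (Icc r b) :=
    fun y hy => if_neg hy.1.not_gt
  have hdisj : Disjoint (Ico a r) (Icc r b) :=
    disjoint_left.mpr fun _ hy hy' => hy'.1.not_gt hy.2
  rw [← Ico_union_Icc_eq_Icc har hrb, setIntegral_union hdisj measurableSet_Icc
      ((hf.mono_set Ico_subset_Icc_self).congr_fun hleft.symm measurableSet_Ico)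
      (hh.congr_fun hright.symm measurableSet_Icc),
    setIntegral_congr_fun measurableSet_Ico hleft, setIntegral_congr_fun measurableSet_Icc hright,
    integral_Icc_eq_integral_Ico (x := a)]

theorem reachesConsensusOn_of_ae_abs_sub_le {u : ℝ → ℝ → ℝ} {A : Set ℝ} {c b : ℝ → ℝ}
    (hb : Tendsto b atTop (nhds 0))
    (hu : ∀ᶠ t in atTop, ∀ᵐ x ∂volume.restrict A, |u x t - c t| ≤ b t) :
    ReachesConsensusOn u A := by
  intro ε hε
  obtain ⟨T, hT⟩ := eventually_atTop.mp (hu.and (hb.eventually_lt_const (half_pos hε)))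
  refine ⟨T, fun t ht => ?_⟩
  obtain ⟨hut, hbt⟩ := hT t ht
  filter_upwards [Measure.quasiMeasurePreserving_fst.ae hut,
    Measure.quasiMeasurePreserving_snd.ae hut] with p hfst hsnd
  calc |u p.1 t - u p.2 t|
      ≤ |u p.1 t - c t| + |c t - u p.2 t| := abs_sub_le _ _ _
    _ = |u p.1 t - c t| + |u p.2 t - c t| := by rw [abs_sub_comm (c t)]
    _ ≤ ε := by linarith

theorem IsLinf.integrableOn {g : ℝ → ℝ} (hg : IsLinf g) : IntegrableOn g (Icc 0 1) := by
  obtain ⟨hmeas, M, hM⟩ := hg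
  exact Measure.integrableOn_of_bounded (by simp) hmeas.aestronglyMeasurable hM

namespace IsKernel

variable {W : ℝ → ℝ → ℝ}

theorem abs_le_one (hW : IsKernel W) (x y : ℝ) : |W x y| ≤ 1 :=
  abs_le.mpr (hW.2.2 x y)

theorem integrableOn_mul (hW : IsKernel W) {f : ℝ → ℝ} {s : Set ℝ} (hf : IntegrableOn f s)
    (x : ℝ) : IntegrableOn (fun y => W x y * f y) s :=
  hf.bdd_mul (hW.1.comp measurable_prodMk_left).aestronglyMeasurable
    (Eventually.of_forall (hW.abs_le_one x))

theorem measurable_degW (hW : IsKernel W) : Measurable (degW W) :=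
  hW.1.stronglyMeasurable.integral_prod_right.measurable

theorem abs_degW_le_one (hW : IsKernel W) (x : ℝ) : |degW W x| ≤ 1 := by
  have hbound (y : ℝ) (_ : y ∈ Icc (0 : ℝ) 1) : ‖W x y‖ ≤ 1 := hW.abs_le_one x y
  simpa [degW] using norm_setIntegral_le_of_norm_le_const (μ := volume) (by simp) hbound

theorem integral_mul_sub (hW : IsKernel W) {f : ℝ → ℝ} (hf : IntegrableOn f (Icc 0 1))
    (x c : ℝ) :
    ∫ y in Icc (0 : ℝ) 1, W x y * (f y - c) =
      (∫ y in Icc (0 : ℝ) 1, W x y * f y) - degW W x * c := by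
  simp_rw [mul_sub]
  rw [integral_sub (hW.integrableOn_mul hf x)
    (hW.integrableOn_mul (integrableOn_const (by simp)) x), integral_mul_const, degW]

end IsKernel

/-- The function `u(x, t) = g(x) exp(-d(x) t)` in which every opinion decays at the rate given by
the degree `d` of the kernel `W`; it solves the voting model when the interaction term
`∫ W(x, y) u(y, t) dy` vanishes. -/
def degreeDecay (W : ℝ → ℝ → ℝ) (g : ℝ → ℝ) (x t : ℝ) : ℝ :=
  g x * Real.exp (-degW W x * t)

section DegreeDecay

variable {W : ℝ → ℝ → ℝ} {g : ℝ → ℝ}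

theorem abs_degreeDecay_le {δ x t : ℝ} (hδ : δ ≤ degW W x) (ht : 0 ≤ t) :
    |degreeDecay W g x t| ≤ |g x| * Real.exp (-δ * t) := by
  rw [degreeDecay, abs_mul, Real.abs_exp]
  gcongr

theorem tendsto_degreeDecay {x : ℝ} (hx : 0 < degW W x) :
    Tendsto (degreeDecay W g x) atTop (nhds 0) := by
  unfold degreeDecay
  simpa only [mul_zero] using (tendsto_exp_neg_mul_atTop hx).const_mul (g x)

theorem reachesConsensusOn_degreeDecay {δ : ℝ} (hg : IsLinf g) (hδ : 0 < δ)
    (hdeg : ∀ᵐ x ∂mu01, δ ≤ degW W x) :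
    ReachesConsensusOn (degreeDecay W g) (Icc 0 1) := by
  obtain ⟨-, M, hM⟩ := hg
  have hbound : Tendsto (fun t => M * Real.exp (-δ * t)) atTop (nhds 0) := by
    simpa only [mul_zero] using (tendsto_exp_neg_mul_atTop hδ).const_mul M
  refine reachesConsensusOn_of_ae_abs_sub_le (c := 0) hbound ?_
  filter_upwards [eventually_ge_atTop 0] with t ht
  filter_upwards [hM, hdeg] with x hgx hdx
  calc |degreeDecay W g x t - 0| = |degreeDecay W g x t| := by rw [sub_zero]
    _ ≤ |g x| * Real.exp (-δ * t) := abs_degreeDecay_le hdx ht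
    _ ≤ M * Real.exp (-δ * t) := by gcongr

theorem measurable_uncurry_degreeDecay (hW : IsKernel W) (hg : Measurable g) :
    Measurable (Function.uncurry (degreeDecay W g)) := by
  have hdeg := hW.measurable_degW
  unfold degreeDecay Function.uncurry
  fun_prop

theorem exists_ae_abs_degreeDecay_le (hW : IsKernel W) (hg : IsLinf g) (T : ℝ) :
    ∃ M, ∀ t ∈ Icc 0 T, ∀ᵐ x ∂mu01, |degreeDecay W g x t| ≤ M := by
  obtain ⟨-, M, hM⟩ := hg
  refine ⟨M * Real.exp T, fun t ht => ?_⟩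
  filter_upwards [hM] with x hgx
  calc |degreeDecay W g x t|
      ≤ |g x| * Real.exp (-(-1) * t) :=
        abs_degreeDecay_le (abs_le.mp (hW.abs_degW_le_one x)).1 ht.1
    _ ≤ M * Real.exp T := by
        rw [neg_neg, one_mul]
        gcongr
        exacts [(abs_nonneg _).trans hgx, ht.2]

theorem isLinf_degreeDecay (hW : IsKernel W) (hg : IsLinf g) {t : ℝ} (ht : 0 ≤ t) :
    IsLinf fun x => degreeDecay W g x t :=
  ⟨(measurable_uncurry_degreeDecay hW hg.1).comp measurable_prodMk_right,
    (exists_ae_abs_degreeDecay_le hW hg t).imp fun _ hM => hM t ⟨ht, le_rfl⟩⟩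

theorem isSolution_degreeDecay (hW : IsKernel W) (hg : IsLinf g)
    (hcancel : ∀ᵐ x ∂mu01, ∀ s ≥ 0, ∫ y in Icc (0 : ℝ) 1, W x y * degreeDecay W g y s = 0) :
    IsSolution W g (degreeDecay W g) := by
  refine ⟨measurable_uncurry_degreeDecay hW hg.1,
    fun T _ => exists_ae_abs_degreeDecay_le hW hg T, fun t ht => ?_⟩
  filter_upwards [hcancel] with x hx
  have hrate : EqOn
      (fun s => ∫ y in Icc (0 : ℝ) 1, W x y * (degreeDecay W g y s - degreeDecay W g x s))
      (fun s => -degW W x * (g x * Real.exp (-degW W x * s))) (Icc 0 t) := by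
    intro s hs
    dsimp only
    rw [hW.integral_mul_sub (isLinf_degreeDecay hW hg hs.1).integrableOn, hx s hs.1, zero_sub,
      neg_mul, degreeDecay]
  rw [setIntegral_congr_fun measurableSet_Icc hrate, integral_Icc_neg_mul_exp _ _ ht,
    add_sub_cancel, degreeDecay]

end DegreeDecay

/-- The kernel `W_r`: agents with labels below `r` repel each other, all other pairs attract. -/
def bipartiteKernel (r x y : ℝ) : ℝ := if x < r ∧ y < r then -1 else 1

section BipartiteKernel

variable {r : ℝ}

theorem isKernel_bipartiteKernel (r : ℝ) : IsKernel (bipartiteKernel r) := by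
  refine ⟨Measurable.ite ?_ measurable_const measurable_const, fun x y => ?_, fun x y => ?_⟩
  · exact (measurableSet_lt measurable_fst measurable_const).inter
      (measurableSet_lt measurable_snd measurable_const)
  · simp only [bipartiteKernel, and_comm]
  · unfold bipartiteKernel
    split_ifs <;> simp

theorem bipartiteKernel_eq_ite (r x y : ℝ) :
    bipartiteKernel r x y = if y < r then (if x < r then -1 else 1) else 1 := by
  simp only [bipartiteKernel, and_comm (a := x < r), ite_and]

theorem degW_bipartiteKernel (hr0 : 0 ≤ r) (hr1 : r ≤ 1) (x : ℝ) :
    degW (bipartiteKernel r) x = if x < r then 1 - 2 * r else 1 := by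
  simp only [degW, bipartiteKernel_eq_ite]
  rw [setIntegral_Icc_ite_lt hr0 hr1 (integrableOn_const (by simp))
    (integrableOn_const (by simp))]
  simp only [setIntegral_const, Real.volume_real_Icc_of_le hr0, Real.volume_real_Icc_of_le hr1,
    smul_eq_mul]
  split_ifs <;> ring

theorem degreeDecay_bipartiteKernel (hr0 : 0 ≤ r) (hr1 : r ≤ 1) (g : ℝ → ℝ) :
    degreeDecay (bipartiteKernel r) g = fun x t =>
      if x < r then g x * Real.exp (-(1 - 2 * r) * t) else g x * Real.exp (-t) := by
  ext x t
  rw [degreeDecay, degW_bipartiteKernel hr0 hr1]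
  split_ifs <;> simp

theorem integral_bipartiteKernel_mul_degreeDecay (hr0 : 0 ≤ r) (hr1 : r ≤ 1) {g : ℝ → ℝ}
    (hg : IntegrableOn g (Icc 0 1)) (hleft : ∫ y in Icc 0 r, g y = 0)
    (hright : ∫ y in Icc r 1, g y = 0) (x s : ℝ) :
    ∫ y in Icc (0 : ℝ) 1, bipartiteKernel r x y * degreeDecay (bipartiteKernel r) g y s = 0 := by
  have hblocks (y : ℝ) : bipartiteKernel r x y * degreeDecay (bipartiteKernel r) g y s =
      if y < r then (if x < r then -1 else 1) * Real.exp (-(1 - 2 * r) * s) * g y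
      else Real.exp (-s) * g y := by
    simp only [bipartiteKernel_eq_ite, degreeDecay_bipartiteKernel hr0 hr1]
    split_ifs <;> ring
  simp only [hblocks]
  rw [setIntegral_Icc_ite_lt hr0 hr1
      ((hg.mono_set (Icc_subset_Icc_right hr1)).const_mul _)
      ((hg.mono_set (Icc_subset_Icc_left hr0)).const_mul _),
    integral_const_mul, integral_const_mul, hleft, hright, mul_zero, mul_zero, add_zero]

theorem le_degW_bipartiteKernel (hr0 : 0 ≤ r) (hr1 : r ≤ 1) (x : ℝ) :
    1 - 2 * r ≤ degW (bipartiteKernel r) x := by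
  rw [degW_bipartiteKernel hr0 hr1]
  split_ifs <;> linarith

end BipartiteKernel

/-- For the kernel `W_r` (equal to `−1` on `[0,r)²` and `1` elsewhere) and an initial
condition with zero mean on `[0,r]` and on `[r,1]`, the explicit exponential function
solves the IVP and reaches consensus, with pointwise limit `0` on `[0,1]`. -/
theorem bipartite_kernel_consensus (r : ℝ) (hr0 : 0 < r) (hr : r < 1 / 2)
    (g : ℝ → ℝ) (hg : IsLinf g)
    (hg1 : ∫ y in Set.Icc (0:ℝ) r, g y = 0)
    (hg2 : ∫ y in Set.Icc r 1, g y = 0) :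
    IsSolution (fun x y => if x < r ∧ y < r then (-1:ℝ) else 1) g
      (fun x t => if x < r then g x * Real.exp (-(1 - 2 * r) * t)
        else g x * Real.exp (-t)) ∧
    ReachesConsensusOn
      (fun x t => if x < r then g x * Real.exp (-(1 - 2 * r) * t)
        else g x * Real.exp (-t)) (Set.Icc (0:ℝ) 1) ∧
    ∀ x ∈ Set.Icc (0:ℝ) 1,
      Filter.Tendsto
        (fun t => if x < r then g x * Real.exp (-(1 - 2 * r) * t)
          else g x * Real.exp (-t)) Filter.atTop (nhds 0) := by
  have hr1 : r ≤ 1 := by linarith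
  have hδ : 0 < 1 - 2 * r := by linarith
  have hdeg := le_degW_bipartiteKernel hr0.le hr1
  have hcancel :=
    integral_bipartiteKernel_mul_degreeDecay hr0.le hr1 hg.integrableOn hg1 hg2
  have hsol : IsSolution (bipartiteKernel r) g (degreeDecay (bipartiteKernel r) g) :=
    isSolution_degreeDecay (isKernel_bipartiteKernel r) hg (ae_of_all _ fun x s _ => hcancel x s)
  have hcons : ReachesConsensusOn (degreeDecay (bipartiteKernel r) g) (Icc 0 1) :=
    reachesConsensusOn_degreeDecay hg hδ (ae_of_all _ hdeg)
  have hlim (x : ℝ) : Tendsto (degreeDecay (bipartiteKernel r) g x) atTop (nhds 0) :=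
    tendsto_degreeDecay (hδ.trans_le (hdeg x))
  rw [degreeDecay_bipartiteKernel hr0.le hr1] at hsol hcons hlim
  exact ⟨hsol, hcons, fun x _ => hlim x⟩

end
end
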